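/- arXiv:2504.17348 — 2 statements merged into one kernel-verified Lean document; each statement's English description precedes it below -/
import Mathlib

section
/- Let F be an algebraically closed field and let n, t be positive integers with 2t ≤ n ≤ 3t − 1. Let S be a finite generating system of the full matrix algebra M_n(F) with m(S) = t. Then 2·ℓ(S) ≤ 7n − 8 (i.e., ℓ(S) ≤ 7n/2 − 4). -/
open Polynomial Matrix

/-- The `F`-linear span of all words over `S` of length at most `i`
(the empty word being `1`). -/
def wordSpan (F : Type*) {A : Type*} [Field F] [Ring A] [Algebra F A]
    (S : Set A) (i : ℕ) : Submodule F A :=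
  Submodule.span F {x : A | ∃ l : List A, l.length ≤ i ∧ (∀ a ∈ l, a ∈ S) ∧ l.prod = x}

/-- `S` is a generating system of the algebra `A`:
`A` is the union of the subspaces `wordSpan F S i`. -/
def IsGeneratingSystem (F : Type*) {A : Type*} [Field F] [Ring A] [Algebra F A]
    (S : Set A) : Prop :=
  ∀ x : A, ∃ i : ℕ, x ∈ wordSpan F S i

/-- The length of a generating system `S`: the least `k` with `wordSpan F S k = ⊤`. -/
noncomputable def genLength (F : Type*) {A : Type*} [Field F] [Ring A] [Algebra F A]
    (S : Set A) : ℕ :=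
  sInf {k : ℕ | wordSpan F S k = ⊤}

/-!
Let `A ∈ S` have a minimal polynomial of degree `t`, and split it into linear factors. Multiplying
the factors up one at a time, each new factor lowers the rank by at least the rank of the product
of all the others (Frobenius' inequality). Since `n < 3 * t`, some product `B` of `t - 1` factors
has rank at most `2`, and `B ≠ 0` by minimality.

For any nonzero `M` the chain `L_i(S) M` gains a dimension at each step until it reaches
`M_n(F) M`, so `L_{n-1}(S) B` has dimension at least `n`. Its elements have the form
`x ⊗ v₁ + y ⊗ v₂` for two fixed row vectors `v₁`, `v₂`, with `x` and `y` linear in the element,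
so an eigenvalue of the pencil `(x, y)` yields a nonzero `w ∈ L_{n+t-2}(S)` of rank one.
The left and right ideals generated by such a `w` have dimension `n`, whence
`M_n(F) = L_{n-1}(S) w L_{n-1}(S)`, of length at most `3 * (n - 1) + (t - 1)`.
-/

section WordSpan

variable {F A : Type*} [Field F] [Ring A] [Algebra F A] (S : Set A)

theorem wordSpan_mono : Monotone (wordSpan F S) := fun _ _ hij =>
  Submodule.span_mono fun _ ⟨l, hl, hlS, hx⟩ => ⟨l, hl.trans hij, hlS, hx⟩

theorem wordSpan_zero : wordSpan F S 0 = 1 := by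
  rw [wordSpan, Submodule.one_eq_span]
  congr 1
  ext x
  simp [eq_comm]

theorem wordSpan_add (i j : ℕ) : wordSpan F S (i + j) = wordSpan F S i * wordSpan F S j := by
  unfold wordSpan
  rw [Submodule.span_mul_span]
  congr 1
  ext x
  constructor
  · rintro ⟨l, hl, hlS, rfl⟩
    refine ⟨(l.take i).prod, ⟨l.take i, by simp, fun a ha => hlS a (List.mem_of_mem_take ha), rfl⟩,
      (l.drop i).prod, ⟨l.drop i, by grind, fun a ha => hlS a (List.mem_of_mem_drop ha), rfl⟩, ?_⟩
    exact List.prod_take_mul_prod_drop l i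
  · rintro ⟨_, ⟨k, hk, hkS, rfl⟩, _, ⟨l, hl, hlS, rfl⟩, rfl⟩
    exact ⟨k ++ l, by grind, by grind, List.prod_append⟩

variable {S}

theorem aeval_mem_wordSpan {a : A} (ha : a ∈ S) {p : F[X]} {i : ℕ} (hp : p.natDegree ≤ i) :
    aeval a p ∈ wordSpan F S i := by
  rw [aeval_eq_sum_range' (Nat.lt_succ_of_le hp)]
  refine Submodule.sum_mem _ fun j hj => Submodule.smul_mem _ _ (Submodule.subset_span ?_)
  exact ⟨List.replicate j a, by grind, by grind, List.prod_replicate j a⟩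

theorem IsGeneratingSystem.iSup_wordSpan (hS : IsGeneratingSystem F S) :
    ⨆ i, wordSpan F S i = ⊤ :=
  eq_top_iff.2 fun x _ => let ⟨i, hi⟩ := hS x; Submodule.mem_iSup_of_mem i hi

end WordSpan

section Growth

variable {F V : Type*} [Field F] [AddCommGroup V] [Module F V] [FiniteDimensional F V]

theorem min_le_finrank_of_forall_succ_eq {W : ℕ → Submodule F V} (hW : Monotone W)
    (hW₀ : W 0 ≠ ⊥) (Φ : Submodule F V → Submodule F V) (hΦ : ∀ i, W (i + 1) = Φ (W i)) (i : ℕ) :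
    min (i + 1) (Module.finrank F ↥(⨆ k, W k)) ≤ Module.finrank F (W i) := by
  induction i with
  | zero => exact (min_le_left _ _).trans (Submodule.one_le_finrank_iff.2 hW₀)
  | succ i ih =>
    rcases (hW i.le_succ).eq_or_lt with heq | hlt
    · have hstable : ∀ k ≥ i, W k = W i :=
        Nat.le_induction rfl fun k _ hk => by rw [hΦ, hk, ← hΦ, ← heq]
      have hsup : ⨆ k, W k = W i := le_antisymm
        (iSup_le fun k => (hW (le_max_left k i)).trans (hstable _ (le_max_right k i)).le)
        (le_iSup W i)
      rw [hsup, ← heq]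
      exact min_le_right _ _
    · have := Submodule.finrank_lt_finrank_of_lt hlt
      grind

variable {A : Type*} [Ring A] [Algebra F A] [FiniteDimensional F A] {S : Set A}

theorem min_le_finrank_wordSpan_mul (hS : IsGeneratingSystem F S) {N : Submodule F A}
    (hN : N ≠ ⊥) (i : ℕ) :
    min (i + 1) (Module.finrank F ↥(⊤ * N)) ≤ Module.finrank F ↥(wordSpan F S i * N) := by
  rw [← hS.iSup_wordSpan, Submodule.iSup_mul]
  refine min_le_finrank_of_forall_succ_eq (W := fun i => wordSpan F S i * N)
    (fun _ _ hij => mul_le_mul_left (wordSpan_mono S hij) N) ?_ (wordSpan F S 1 * ·) (fun i => ?_) i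
  · rwa [wordSpan_zero, one_mul]
  · rw [add_comm, wordSpan_add, mul_assoc]

theorem min_le_finrank_mul_wordSpan (hS : IsGeneratingSystem F S) {N : Submodule F A}
    (hN : N ≠ ⊥) (i : ℕ) :
    min (i + 1) (Module.finrank F ↥(N * ⊤)) ≤ Module.finrank F ↥(N * wordSpan F S i) := by
  rw [← hS.iSup_wordSpan, Submodule.mul_iSup]
  refine min_le_finrank_of_forall_succ_eq (W := fun i => N * wordSpan F S i)
    (fun _ _ hij => mul_le_mul_right (wordSpan_mono S hij) N) ?_ (· * wordSpan F S 1)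
    (fun i => ?_) i
  · rwa [wordSpan_zero, mul_one]
  · rw [wordSpan_add, mul_assoc]

theorem wordSpan_mul_eq_top_mul (hS : IsGeneratingSystem F S) {N : Submodule F A} (hN : N ≠ ⊥)
    {i : ℕ} (hi : Module.finrank F ↥(⊤ * N) ≤ i + 1) : wordSpan F S i * N = ⊤ * N :=
  Submodule.eq_of_le_of_finrank_le (mul_le_mul_left le_top N) <| by
    simpa [hi] using min_le_finrank_wordSpan_mul hS hN i

theorem mul_wordSpan_eq_mul_top (hS : IsGeneratingSystem F S) {N : Submodule F A} (hN : N ≠ ⊥)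
    {i : ℕ} (hi : Module.finrank F ↥(N * ⊤) ≤ i + 1) : N * wordSpan F S i = N * ⊤ :=
  Submodule.eq_of_le_of_finrank_le (mul_le_mul_right le_top N) <| by
    simpa [hi] using min_le_finrank_mul_wordSpan hS hN i

end Growth

theorem top_mul_span_singleton_mul_top {F A : Type*} [Field F] [Ring A] [Algebra F A]
    [IsSimpleRing A] {w : A} (hw : w ≠ 0) :
    (⊤ : Submodule F A) * Submodule.span F {w} * ⊤ = ⊤ := by
  set T : Submodule F A := ⊤ * Submodule.span F {w} * ⊤
  have hleft : ⊤ * T ≤ T := by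
    simp only [T, ← mul_assoc]
    gcongr
    exact le_top
  have hright : T * ⊤ ≤ T := by
    simp only [T, mul_assoc]
    gcongr
    exact le_top
  have hwT : w ∈ T := by
    simpa using Submodule.mul_mem_mul (Submodule.mul_mem_mul (Submodule.mem_top (x := (1 : A)))
      (Submodule.mem_span_singleton_self w)) (Submodule.mem_top (x := (1 : A)))
  have hspan : TwoSidedIdeal.span {w} = ⊤ := (eq_bot_or_eq_top _).resolve_left fun h =>
    hw <| (TwoSidedIdeal.mem_bot A).1 <| h ▸ TwoSidedIdeal.subset_span rfl
  refine eq_top_iff.2 fun x _ => ?_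
  have hx : x ∈ TwoSidedIdeal.span {w} := hspan ▸ TwoSidedIdeal.mem_top A
  induction hx using TwoSidedIdeal.span_induction with
  | mem x hx => rwa [Set.mem_singleton_iff.1 hx]
  | zero => exact T.zero_mem
  | add x y _ _ hx hy => exact T.add_mem (hx trivial) (hy trivial)
  | neg x _ hx => exact T.neg_mem (hx trivial)
  | left_absorb a x _ hx => exact hleft (Submodule.mul_mem_mul trivial (hx trivial))
  | right_absorb a x _ hx => exact hright (Submodule.mul_mem_mul (hx trivial) trivial)

section Rank

variable {F l m n o : Type*} [Field F]

theorem rank_pos_of_ne_zero [Finite m] [Fintype n] {B : Matrix m n F} (hB : B ≠ 0) :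
    0 < B.rank := by
  classical
  cases nonempty_fintype m
  refine Submodule.one_le_finrank_iff.2 fun h => hB ?_
  exact Matrix.toLin'.map_eq_zero_iff.1 (LinearMap.range_eq_bot.1 h)

theorem exists_mul_mul_eq_self_of_rank_le [Finite m] [Fintype n] (B : Matrix m n F) {r : ℕ}
    (hB : B.rank ≤ r) :
    ∃ (R : Matrix n (Fin r) F) (Q : Matrix (Fin r) n F), B * R * Q = B := by
  classical
  cases nonempty_fintype m
  let β := B.mulVecLin.rangeRestrict
  obtain ⟨σ, hσ⟩ := β.exists_rightInverse_of_surjective B.mulVecLin.range_rangeRestrict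
  obtain ⟨ι, hι⟩ := finrank_le_iff_exists_linearMap.1 (hB.trans_eq (Module.finrank_fin_fun F).symm)
  obtain ⟨π, hπ⟩ := ι.exists_leftInverse_of_injective (LinearMap.ker_eq_bot.2 hι)
  refine ⟨LinearMap.toMatrix' (σ ∘ₗ π), LinearMap.toMatrix' (ι ∘ₗ β),
    Matrix.toLin'.injective <| LinearMap.ext fun x => ?_⟩
  have hπι : π (ι (β x)) = β x := LinearMap.congr_fun hπ (β x)
  have hBσ : B *ᵥ σ (β x) = B *ᵥ x := congrArg Subtype.val (LinearMap.congr_fun hσ (β x))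
  simp [Matrix.toLin'_mul, hπι, hBσ]

-- Factoring `H` through a space of dimension `H.rank` reduces this to Sylvester's inequality.
theorem rank_mul_add_rank_mul_le [Finite l] [Fintype m] [Fintype n] [Fintype o]
    {G : Matrix l m F} {H : Matrix m n F} {K : Matrix n o F} (h : G * H * K = 0) :
    (G * H).rank + (H * K).rank ≤ H.rank := by
  obtain ⟨R, Q, hRQ⟩ := exists_mul_mul_eq_self_of_rank_le H le_rfl
  have hzero : G * (H * R) * (Q * K) = 0 :=
    calc G * (H * R) * (Q * K) = G * (H * R * Q) * K := by simp only [Matrix.mul_assoc]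
      _ = 0 := by rw [hRQ, h]
  calc (G * H).rank + (H * K).rank
      = (G * (H * R) * Q).rank + (H * R * (Q * K)).rank := by
        rw [Matrix.mul_assoc G, hRQ, ← Matrix.mul_assoc _ Q, hRQ]
    _ ≤ (G * (H * R)).rank + (Q * K).rank :=
        add_le_add (Matrix.rank_mul_le_left _ _) (Matrix.rank_mul_le_right _ _)
    _ ≤ H.rank := by simpa using Matrix.rank_add_rank_le_card_of_mul_eq_zero hzero

theorem finrank_top_mul_span_singleton [Fintype n] [DecidableEq n] (B : Matrix n n F) :
    Module.finrank F ↥(⊤ * Submodule.span F {B}) = Fintype.card n * B.rank := by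
  let ρ : (n → LinearMap.range B.vecMulLinear) →ₗ[F] Matrix n n F :=
    (LinearMap.range B.vecMulLinear).subtype.compLeft n
  have hρ : Function.Injective ρ := fun x y hxy =>
    funext fun i => Subtype.ext (congrFun hxy i)
  have hrange : LinearMap.range ρ = ⊤ * Submodule.span F {B} := by
    ext M
    rw [Submodule.mem_mul_span_singleton]
    constructor
    · rintro ⟨x, rfl⟩
      choose X hX using fun i => (x i).2
      exact ⟨X, trivial, funext hX⟩
    · rintro ⟨X, -, rfl⟩
      exact ⟨fun i => ⟨X i ᵥ* B, X i, rfl⟩, rfl⟩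
  rw [← hrange, LinearMap.finrank_range_of_inj hρ, Module.finrank_pi_fintype, Finset.sum_const,
    range_vecMulLinear, ← Matrix.rank_eq_finrank_span_row, smul_eq_mul, Finset.card_univ]

theorem finrank_span_singleton_mul_top [Fintype n] [DecidableEq n] (B : Matrix n n F) :
    Module.finrank F ↥(Submodule.span F {B} * ⊤) = Fintype.card n * B.rank := by
  have hmap : (Submodule.span F {B} * ⊤).map (transposeLinearEquiv n n F F).toLinearMap =
      ⊤ * Submodule.span F {Bᵀ} := by
    ext M
    rw [Submodule.mem_map, Submodule.mem_mul_span_singleton]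
    simp only [Submodule.mem_span_singleton_mul]
    constructor
    · rintro ⟨_, ⟨X, -, rfl⟩, rfl⟩
      exact ⟨Xᵀ, trivial, (transpose_mul B X).symm⟩
    · rintro ⟨X, -, rfl⟩
      exact ⟨B * Xᵀ, ⟨Xᵀ, trivial, rfl⟩, by simp⟩
  rw [← LinearEquiv.finrank_map_eq (transposeLinearEquiv n n F F), hmap,
    finrank_top_mul_span_singleton, rank_transpose]

variable [Fintype n] [DecidableEq n]

theorem rank_aeval_prod_add_mul_card_le {A : Matrix n n F} {s : Multiset F[X]}
    (hs : aeval A s.prod = 0) {r : ℕ} (hr : ∀ g t, s = g ::ₘ t → r ≤ (aeval A t.prod).rank)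
    {u : Multiset F[X]} (hu : u ≤ s) :
    (aeval A u.prod).rank + r * u.card ≤ Fintype.card n := by
  induction u using Multiset.induction_on with
  | empty => simp [rank_one]
  | cons g u ih =>
    obtain ⟨v, rfl⟩ := Multiset.le_iff_exists_add.1 hu
    have hcofactor : r ≤ (aeval A u.prod * aeval A v.prod).rank := by
      rw [← map_mul, ← Multiset.prod_add]
      exact hr g (u + v) (Multiset.cons_add g u v)
    have hzero : aeval A g * aeval A u.prod * aeval A v.prod = 0 := by
      rw [← hs, Multiset.prod_add, Multiset.prod_cons, map_mul, map_mul]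
    have hdrop := rank_mul_add_rank_mul_le hzero
    have := ih ((Multiset.le_cons_self u g).trans hu)
    rw [Multiset.prod_cons, map_mul, Multiset.card_cons, mul_add_one]
    omega

theorem exists_eq_cons_rank_aeval_prod_lt {A : Matrix n n F} {s : Multiset F[X]}
    (hs : aeval A s.prod = 0) {r : ℕ} (hr : Fintype.card n < r * s.card) :
    ∃ g t, s = g ::ₘ t ∧ (aeval A t.prod).rank < r := by
  by_contra! h
  have := rank_aeval_prod_add_mul_card_le hs h le_rfl
  omega

theorem exists_aeval_ne_zero_rank_lt {A : Matrix n n F} (hA : (minpoly F A).Splits) {r : ℕ}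
    (hr : Fintype.card n < r * (minpoly F A).natDegree) :
    ∃ q : F[X], q.natDegree < (minpoly F A).natDegree ∧ aeval A q ≠ 0 ∧ (aeval A q).rank < r := by
  have hmonic := minpoly.monic (Algebra.IsIntegral.isIntegral (R := F) A)
  set s := (minpoly F A).roots.map fun a => X - C a
  have hs : s.prod = minpoly F A := (hA.eq_prod_roots_of_monic hmonic).symm
  have hcard : s.card = (minpoly F A).natDegree := by
    rw [Multiset.card_map, hA.natDegree_eq_card_roots]
  obtain ⟨g, t, hst, hrank⟩ :=
    exists_eq_cons_rank_aeval_prod_lt (by rw [hs, minpoly.aeval]) (hcard ▸ hr)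
  obtain ⟨a, -, rfl⟩ := Multiset.mem_map.1 (hst ▸ Multiset.mem_cons_self g t)
  have hfactor : (X - C a) * t.prod = minpoly F A := by
    rw [← hs, hst, Multiset.prod_cons]
  have ht : t.prod ≠ 0 := right_ne_zero_of_mul (hfactor ▸ hmonic.ne_zero)
  have hdeg : t.prod.natDegree < (minpoly F A).natDegree := by
    rw [← hfactor, natDegree_mul (X_sub_C_ne_zero a) ht, natDegree_X_sub_C]
    omega
  exact ⟨t.prod, hdeg, fun h => (natDegree_le_of_dvd (minpoly.dvd F A h) ht).not_gt hdeg, hrank⟩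

end Rank

section Pencil

variable {F : Type*} [Field F] [IsAlgClosed F]

theorem exists_ne_zero_and_eq_zero_or_eq_smul {V W : Type*} [AddCommGroup V] [Module F V]
    [FiniteDimensional F V] [Nontrivial V] [AddCommGroup W] [Module F W] (f g : W →ₗ[F] V)
    (h : Module.finrank F V ≤ Module.finrank F W) :
    ∃ w ≠ 0, g w = 0 ∨ ∃ μ : F, f w = μ • g w := by
  by_cases hg : Function.Injective g
  · have : FiniteDimensional F W := Module.Finite.of_injective g hg
    let e := LinearEquiv.ofInjectiveOfFinrankEq g hg
      (le_antisymm (LinearMap.finrank_le_finrank_of_injective hg) h)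
    obtain ⟨μ, hμ⟩ := Module.End.exists_eigenvalue (f ∘ₗ e.symm.toLinearMap)
    obtain ⟨v, hv⟩ := hμ.exists_hasEigenvector
    have hgv : g (e.symm v) = v := e.apply_symm_apply v
    exact ⟨e.symm v, by simpa using hv.2, .inr ⟨μ, hgv.symm ▸ hv.apply_eq_smul⟩⟩
  · obtain ⟨w, hw, hw₀⟩ := (Submodule.ne_bot_iff _).1 (mt LinearMap.ker_eq_bot.1 hg)
    exact ⟨w, hw₀, .inl hw⟩

theorem exists_mem_ne_zero_rank_le_one {m n : Type*} [Fintype m] [Nonempty m] [Fintype n]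
    {B : Matrix n n F} (hB : B.rank ≤ 2) {W : Submodule F (Matrix m n F)}
    (hWB : ∀ w ∈ W, ∃ M : Matrix m n F, M * B = w)
    (hW : Fintype.card m ≤ Module.finrank F W) : ∃ w ∈ W, w ≠ 0 ∧ w.rank ≤ 1 := by
  obtain ⟨R, Q, hRQ⟩ := exists_mul_mul_eq_self_of_rank_le B hB
  let coord (k : Fin 2) : W →ₗ[F] m → F := (mulVecBilin F F).flip (Rᵀ k) ∘ₗ W.subtype
  have hcoord (w : W) : (w : Matrix m n F) =
      vecMulVec (coord 0 w) (Q 0) + vecMulVec (coord 1 w) (Q 1) := by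
    obtain ⟨M, hM⟩ := hWB w w.2
    have hwRQ : (w : Matrix m n F) * R * Q = w := by
      rw [← hM, Matrix.mul_assoc, Matrix.mul_assoc, ← Matrix.mul_assoc B, hRQ]
    nth_rw 1 [← hwRQ]
    ext i j
    simp [Matrix.mul_apply, Fin.sum_univ_two, vecMulVec_apply, coord, mulVec, dotProduct]
  obtain ⟨w, hw, h | ⟨μ, h⟩⟩ := exists_ne_zero_and_eq_zero_or_eq_smul (coord 0) (coord 1)
    (by simpa using hW)
  · refine ⟨w, w.2, by simpa using hw, ?_⟩
    rw [hcoord, h, zero_vecMulVec, add_zero]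
    exact rank_vecMulVec_le _ _
  · refine ⟨w, w.2, by simpa using hw, ?_⟩
    rw [hcoord, h, smul_vecMulVec, ← vecMulVec_smul, ← vecMulVec_add]
    exact rank_vecMulVec_le _ _

end Pencil

section MatrixLength

variable {F n : Type*} [Field F] [Fintype n] [DecidableEq n] {S : Set (Matrix n n F)}

theorem wordSpan_eq_top_of_rank_le_one (hS : IsGeneratingSystem F S) {w : Matrix n n F} {k : ℕ}
    (hwk : w ∈ wordSpan F S k) (hw : w ≠ 0) (hrank : w.rank ≤ 1) {i : ℕ}
    (hi : Fintype.card n ≤ i + 1) : wordSpan F S (i + k + i) = ⊤ := by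
  have : Nonempty n := not_isEmpty_iff.1 fun _ => hw (Subsingleton.elim _ _)
  have hspan : Submodule.span F {w} ≠ ⊥ := by simpa using hw
  have hdim : Fintype.card n * w.rank ≤ i + 1 :=
    (Nat.mul_le_mul_left _ hrank).trans (by omega)
  rw [eq_top_iff, ← top_mul_span_singleton_mul_top hw,
    ← wordSpan_mul_eq_top_mul hS hspan ((finrank_top_mul_span_singleton w).trans_le hdim),
    mul_assoc,
    ← mul_wordSpan_eq_mul_top hS hspan ((finrank_span_singleton_mul_top w).trans_le hdim),
    ← mul_assoc, wordSpan_add, wordSpan_add]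
  gcongr
  exact (Submodule.span_singleton_le_iff_mem _ _).2 hwk

theorem exists_mem_wordSpan_rank_le_one [IsAlgClosed F] [Nonempty n]
    (hS : IsGeneratingSystem F S) {B : Matrix n n F} {k : ℕ} (hBk : B ∈ wordSpan F S k)
    (hB : B ≠ 0) (hrank : B.rank ≤ 2) {i : ℕ} (hi : Fintype.card n ≤ i + 1) :
    ∃ w ∈ wordSpan F S (i + k), w ≠ 0 ∧ w.rank ≤ 1 := by
  have htop : Fintype.card n ≤ Module.finrank F ↥(⊤ * Submodule.span F {B}) := by
    rw [finrank_top_mul_span_singleton]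
    exact Nat.le_mul_of_pos_right _ (rank_pos_of_ne_zero hB)
  have hdim : Fintype.card n ≤ Module.finrank F ↥(wordSpan F S i * Submodule.span F {B}) :=
    (le_min hi htop).trans (min_le_finrank_wordSpan_mul hS (by simpa using hB) i)
  obtain ⟨w, hw, hw₀⟩ := exists_mem_ne_zero_rank_le_one hrank
    (fun w hw => (Submodule.mem_mul_span_singleton.1 hw).imp fun _ => And.right) hdim
  refine ⟨w, ?_, hw₀⟩
  rw [wordSpan_add]
  exact mul_le_mul_right ((Submodule.span_singleton_le_iff_mem _ _).2 hBk) _ hw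

theorem length_le_of_minpoly_deg_between_general [IsAlgClosed F] (hS : IsGeneratingSystem F S)
    {A : Matrix n n F} (hA : A ∈ S) (hdeg : Fintype.card n < 3 * (minpoly F A).natDegree) :
    genLength F S + 4 ≤ 3 * Fintype.card n + (minpoly F A).natDegree := by
  obtain ⟨q, hq, hB, hrank⟩ := exists_aeval_ne_zero_rank_lt (IsAlgClosed.splits _) hdeg
  have : Nonempty n := not_isEmpty_iff.1 fun _ => hB (Subsingleton.elim _ _)
  have hn : 0 < Fintype.card n := Fintype.card_pos
  obtain ⟨w, hwk, hw, hw₁⟩ := exists_mem_wordSpan_rank_le_one hS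
    (aeval_mem_wordSpan hA (Nat.le_sub_one_of_lt hq)) hB (Nat.le_of_lt_succ hrank)
    (i := Fintype.card n - 1) (by omega)
  have htop := wordSpan_eq_top_of_rank_le_one hS hwk hw hw₁ (i := Fintype.card n - 1) (by omega)
  have hlength : genLength F S ≤ _ := Nat.sInf_le htop
  omega

end MatrixLength

theorem length_le_of_minpoly_deg_between
    (F : Type*) [Field F] [IsAlgClosed F] (n t : ℕ)
    (hn : 0 < n) (ht : 0 < t) (h1 : 2 * t ≤ n) (h2 : n + 1 ≤ 3 * t)
    (S : Finset (Matrix (Fin n) (Fin n) F))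
    (hgen : IsGeneratingSystem F (S : Set (Matrix (Fin n) (Fin n) F)))
    (hm : S.sup (fun M => (minpoly F M).natDegree) = t) :
    2 * genLength F (S : Set (Matrix (Fin n) (Fin n) F)) ≤ 7 * n - 8 := by
  have hS : S.Nonempty := by
    rw [Finset.nonempty_iff_ne_empty]
    rintro rfl
    simp [ht.ne] at hm
  obtain ⟨A, hA, hAt⟩ := S.exists_mem_eq_sup hS fun M => (minpoly F M).natDegree
  replace hAt : t = (minpoly F A).natDegree := hm.symm.trans hAt
  have := length_le_of_minpoly_deg_between_general hgen hA (by rw [Fintype.card_fin]; omega)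
  rw [Fintype.card_fin] at this
  omega
end

section
/- Let F be an algebraically closed field, let n and k be positive integers with 2k < n, and let S be a finite generating system of the full matrix algebra M_n(F). Suppose S contains a matrix A whose minimal polynomial has degree n − k, and suppose that for every eigenvalue λ of A, writing n_λ for the algebraic multiplicity of λ (its multiplicity as a root of the characteristic polynomial of A) and m_λ for its multiplicity as a root of the minimal polynomial of A, one has 2(n_λ − m_λ) < n_λ. Then ℓ(S) ≤ 2n − 2 + k. -/
open Polynomial Matrix

/-!
Write `n = dim V` and let `p`, of degree `n - k`, be the minimal polynomial of `a`. View `V` as an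
`F[X]`-module through `a`, choose a vector `c` with annihilator `(p)`, and let `(g)` be the
annihilator of `V ⧸ F[X]c`, so that `p = g * s`. As `deg g ≤ dim (V ⧸ F[X]c) = k`, the image of
`g(a)` is the cyclic module `F[X](g c) ≅ F[X] ⧸ (s)`, of dimension `deg s ≥ n - 2k`.

The space `L` of words of length at most `n - 1` is transitive, so `φ ∘ L` is the whole dual of `V`
for every nonzero functional `φ`. Peeling off the linear factors of `s` one at a time, each step
being such a statement about functionals, shows that the maps `f(a) g(a) W`, with `f` a polynomial
and `W ∈ L`, span all endomorphisms with values in the image of `g(a)`. Since `f(a) g(a)` is a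
combination of powers of `a` below `a ^ (n - k)`, these endomorphisms have length at most
`(n - k - 1) + (n - 1)`, and words of length at most `2k` carry the image of `g(a)` onto `V`.
-/

open Module

section WordSpan

variable {F A B : Type*} [Field F] [Ring A] [Algebra F A] [Ring B] [Algebra F B] {S : Set A}

lemma wordSpan_mono_s18 {i j : ℕ} (hij : i ≤ j) : wordSpan F S i ≤ wordSpan F S j :=
  Submodule.span_mono fun _ ⟨l, hl, hlS, hprod⟩ ↦ ⟨l, hl.trans hij, hlS, hprod⟩

lemma one_mem_wordSpan (i : ℕ) : (1 : A) ∈ wordSpan F S i :=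
  Submodule.subset_span ⟨[], by simp⟩

lemma mem_wordSpan_one {a : A} (ha : a ∈ S) : a ∈ wordSpan F S 1 :=
  Submodule.subset_span ⟨[a], by simpa⟩

lemma wordSpan_mul_wordSpan_le (i j : ℕ) :
    wordSpan F S i * wordSpan F S j ≤ wordSpan F S (i + j) := by
  unfold wordSpan
  rw [Submodule.span_mul_span]
  apply Submodule.span_mono
  rintro _ ⟨_, ⟨l, hl, hlS, rfl⟩, _, ⟨m, hm, hmS, rfl⟩, rfl⟩
  refine ⟨l ++ m, by simp only [List.length_append]; lia, fun a ha ↦ ?_, List.prod_append⟩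
  exact (List.mem_append.1 ha).elim (hlS a) (hmS a)

lemma mul_mem_wordSpan_add {i j : ℕ} {x y : A} (hx : x ∈ wordSpan F S i)
    (hy : y ∈ wordSpan F S j) : x * y ∈ wordSpan F S (i + j) :=
  wordSpan_mul_wordSpan_le i j (Submodule.mul_mem_mul hx hy)

lemma pow_mem_wordSpan {a : A} (ha : a ∈ S) (i : ℕ) : a ^ i ∈ wordSpan F S i :=
  Submodule.subset_span ⟨List.replicate i a, by simp +contextual [List.mem_replicate, ha]⟩

lemma aeval_mem_wordSpan_natDegree {a : A} (ha : a ∈ S) (f : F[X]) :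
    aeval a f ∈ wordSpan F S f.natDegree := by
  rw [aeval_eq_sum_range]
  refine Submodule.sum_mem _ fun i hi ↦ Submodule.smul_mem _ _ ?_
  exact wordSpan_mono_s18 (Finset.mem_range_succ_iff.1 hi) (pow_mem_wordSpan ha i)

lemma aeval_mem_wordSpan_natDegree_minpoly {a : A} (ha : a ∈ S) (hint : IsIntegral F a)
    (f : F[X]) : aeval a f ∈ wordSpan F S ((minpoly F a).natDegree - 1) := by
  have hmonic := minpoly.monic hint
  have hdeg : (f %ₘ minpoly F a).natDegree ≤ (minpoly F a).natDegree - 1 := by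
    by_cases hone : minpoly F a = 1
    · simp [hone]
    · exact Nat.le_sub_one_of_lt (natDegree_modByMonic_lt f hmonic hone)
  rw [← aeval_modByMonic_eq_self_of_root (minpoly.aeval F a)]
  exact wordSpan_mono_s18 hdeg (aeval_mem_wordSpan_natDegree ha _)

lemma map_wordSpan (φ : A →ₐ[F] B) (S : Set A) (i : ℕ) :
    (wordSpan F S i).map φ.toLinearMap = wordSpan F (φ '' S) i := by
  rw [wordSpan, wordSpan, Submodule.map_span]
  congr 1
  ext x
  constructor
  · rintro ⟨_, ⟨l, hl, hlS, rfl⟩, rfl⟩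
    exact ⟨l.map φ, by simpa, by simpa using fun a ha ↦ ⟨a, hlS a ha, rfl⟩,
      (map_list_prod φ l).symm⟩
  · rintro ⟨l, hl, hlS, rfl⟩
    obtain ⟨l, rfl⟩ : l ∈ Set.range (List.map fun s : S ↦ φ s) := by
      simpa only [Set.range_list_map, ← Set.image_eq_range]
    refine ⟨(l.map (↑)).prod, ⟨l.map (↑), by simpa using hl, by simp +contextual, rfl⟩, ?_⟩
    simp [map_list_prod]

lemma map_wordSpan_algEquiv (e : A ≃ₐ[F] B) (S : Set A) (i : ℕ) :
    (wordSpan F S i).map e.toLinearMap = wordSpan F (e '' S) i :=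
  map_wordSpan e.toAlgHom S i

lemma genLength_image (e : A ≃ₐ[F] B) (S : Set A) : genLength F (e '' S) = genLength F S := by
  have h (i : ℕ) : wordSpan F (e '' S) i = ⊤ ↔ wordSpan F S i = ⊤ := by
    rw [← map_wordSpan_algEquiv]
    exact Submodule.map_eq_top_iff (e := e.toLinearEquiv)
  simp only [genLength, h]

lemma IsGeneratingSystem.image (hS : IsGeneratingSystem F S) (e : A ≃ₐ[F] B) :
    IsGeneratingSystem F (e '' S) := by
  intro x
  obtain ⟨i, hi⟩ := hS (e.symm x)
  rw [← e.apply_symm_apply x]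
  exact ⟨i, map_wordSpan_algEquiv e S i ▸ Submodule.mem_map_of_mem hi⟩

lemma IsGeneratingSystem.adjoin_eq_top (hS : IsGeneratingSystem F S) :
    Algebra.adjoin F S = ⊤ := by
  refine eq_top_iff.2 fun x _ ↦ ?_
  obtain ⟨i, hi⟩ := hS x
  have hle : wordSpan F S i ≤ Subalgebra.toSubmodule (Algebra.adjoin F S) := by
    refine Submodule.span_le.2 ?_
    rintro _ ⟨l, -, hlS, rfl⟩
    exact Subalgebra.list_prod_mem _ fun a ha ↦ Algebra.subset_adjoin (hlS a ha)
  exact hle hi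

end WordSpan

section SimpleModule

variable {F A N : Type*} [Field F] [Ring A] [Algebra F A] [AddCommGroup N] [Module F N]
  [Module A N] [IsScalarTower F A N] {S : Set A} {W : Submodule F N}

lemma IsGeneratingSystem.smul_mem (hS : IsGeneratingSystem F S)
    (hW : ∀ s ∈ S, ∀ y ∈ W, s • y ∈ W) (x : A) {y : N} (hy : y ∈ W) : x • y ∈ W := by
  have hx : x ∈ Algebra.adjoin F S := hS.adjoin_eq_top ▸ Algebra.mem_top
  induction hx using Algebra.adjoin_induction generalizing y with
  | mem s hs => exact hW s hs y hy
  | algebraMap r => simpa using W.smul_mem r hy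
  | add x z _ _ hx hz => simpa only [add_smul] using W.add_mem (hx hy) (hz hy)
  | mul x z _ _ hx hz => simpa only [mul_smul] using hx (hz hy)

lemma IsGeneratingSystem.eq_top_of_smul_mem [IsSimpleModule A N] (hS : IsGeneratingSystem F S)
    (hW : ∀ s ∈ S, ∀ y ∈ W, s • y ∈ W) (hne : W ≠ ⊥) : W = ⊤ := by
  obtain ⟨y, hy, hy0⟩ := Submodule.exists_mem_ne_zero_of_ne_bot hne
  refine eq_top_iff.2 fun z _ ↦ ?_
  obtain ⟨x, rfl⟩ := IsSimpleModule.toSpanSingleton_surjective A hy0 z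
  exact hS.smul_mem hW x hy

lemma wordSpan_smul_mono {i j : ℕ} (hij : i ≤ j) : wordSpan F S i • W ≤ wordSpan F S j • W :=
  Submodule.smul_mono_left (wordSpan_mono_s18 hij)

lemma le_wordSpan_smul (i : ℕ) : W ≤ wordSpan F S i • W := fun y hy ↦ by
  simpa using Submodule.smul_mem_smul (one_mem_wordSpan (F := F) (S := S) i) hy

lemma IsGeneratingSystem.wordSpan_smul_lt_succ [IsSimpleModule A N]
    (hS : IsGeneratingSystem F S) (hW : W ≠ ⊥) {j : ℕ} (hj : wordSpan F S j • W ≠ ⊤) :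
    wordSpan F S j • W < wordSpan F S (j + 1) • W := by
  refine lt_of_le_not_ge (wordSpan_smul_mono j.le_succ) fun hle ↦ hj ?_
  have hne : wordSpan F S j • W ≠ ⊥ := ne_bot_of_le_ne_bot hW (le_wordSpan_smul j)
  refine hS.eq_top_of_smul_mem (fun s hs y hy ↦ hle ?_) hne
  refine Submodule.smul_induction_on hy (fun x hx y hy ↦ ?_) fun y z hy hz ↦ ?_
  · rw [← mul_smul, add_comm]
    exact Submodule.smul_mem_smul (mul_mem_wordSpan_add (mem_wordSpan_one hs) hx) hy
  · simpa only [smul_add] using add_mem hy hz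

theorem IsGeneratingSystem.wordSpan_smul_eq_top [IsSimpleModule A N] [FiniteDimensional F N]
    (hS : IsGeneratingSystem F S) (hW : W ≠ ⊥) {j : ℕ} (hj : finrank F N ≤ finrank F W + j) :
    wordSpan F S j • W = ⊤ := by
  have hgrow (i : ℕ) : wordSpan F S i • W = ⊤ ∨
      finrank F W + i ≤ finrank F ↥(wordSpan F S i • W) := by
    induction i with
    | zero => exact .inr (Submodule.finrank_mono (le_wordSpan_smul 0))
    | succ i ih =>
      by_cases htop : wordSpan F S i • W = ⊤
      · exact .inl (eq_top_mono (wordSpan_smul_mono i.le_succ) htop)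
      · have := Submodule.finrank_lt_finrank_of_lt (hS.wordSpan_smul_lt_succ hW htop)
        grind
  rcases hgrow j with htop | hle
  · exact htop
  · exact Submodule.eq_top_of_finrank_eq (le_antisymm (Submodule.finrank_le _) (hj.trans hle))

end SimpleModule

section Transitive

variable {F V V' : Type*} [Field F] [AddCommGroup V] [Module F V] [AddCommGroup V'] [Module F V']

/-- A space of linear maps `V → V'` is *transitive* if it moves every nonzero vector of `V` to
every vector of `V'`. -/
def IsTransitive (L : Submodule F (V →ₗ[F] V')) : Prop :=
  ∀ x ≠ 0, ∀ y, ∃ T ∈ L, T x = y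

lemma IsGeneratingSystem.isTransitive_wordSpan [FiniteDimensional F V] {S : Set (End F V)}
    (hS : IsGeneratingSystem F S) : IsTransitive (wordSpan F S (finrank F V - 1)) := by
  intro x hx y
  have : Nontrivial V := ⟨x, 0, hx⟩
  have hy : y ∈ wordSpan F S (finrank F V - 1) • (F ∙ x) := by
    rw [hS.wordSpan_smul_eq_top (by simpa) (by rw [finrank_span_singleton hx]; lia)]
    trivial
  refine Submodule.smul_induction_on hy (fun T hT z hz ↦ ?_) ?_
  · obtain ⟨c, rfl⟩ := Submodule.mem_span_singleton.1 hz
    exact ⟨c • T, Submodule.smul_mem _ c hT, by simp⟩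
  · rintro _ _ ⟨T, hT, rfl⟩ ⟨R, hR, rfl⟩
    exact ⟨T + R, add_mem hT hR, rfl⟩

lemma exists_ne_zero_forall_dual_apply_eq_zero [FiniteDimensional F V]
    {Φ : Submodule F (Dual F V)} (hΦ : Φ ≠ ⊤) : ∃ x ≠ 0, ∀ φ ∈ Φ, φ x = 0 := by
  have hbot : Φ.dualCoannihilator ≠ ⊥ := by
    intro hbot
    rw [← Subspace.dualCoannihilator_dualAnnihilator_eq (W := Φ), hbot,
      Submodule.dualAnnihilator_bot] at hΦ
    exact hΦ rfl
  obtain ⟨x, hx, hx0⟩ := Submodule.exists_mem_ne_zero_of_ne_bot hbot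
  exact ⟨x, hx0, (Submodule.mem_dualCoannihilator x).1 hx⟩

lemma IsTransitive.exists_comp_eq [FiniteDimensional F V] {L : Submodule F (V →ₗ[F] V')}
    (hL : IsTransitive L) {φ : Dual F V'} (hφ : φ ≠ 0) (ψ : Dual F V) :
    ∃ T ∈ L, φ ∘ₗ T = ψ := by
  suffices htop : L.map (LinearMap.compRight F φ) = ⊤ by
    have hψ : ψ ∈ L.map (LinearMap.compRight F φ) := htop ▸ Submodule.mem_top
    simpa using hψ
  by_contra hne
  obtain ⟨x, hx0, hx⟩ := exists_ne_zero_forall_dual_apply_eq_zero hne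
  refine hφ (LinearMap.ext fun y ↦ ?_)
  obtain ⟨T, hT, rfl⟩ := hL x hx0 y
  exact hx _ (Submodule.mem_map_of_mem hT)

lemma exists_eq_smulRight {M : V →ₗ[F] V'} {u : V'} (hu : u ≠ 0) (hM : ∀ x, M x ∈ F ∙ u) :
    ∃ ψ : Dual F V, M = ψ.smulRight u :=
  ⟨(LinearEquiv.coord F V' u hu).toLinearMap ∘ₗ M.codRestrict _ hM,
    LinearMap.ext fun x ↦ by simp⟩

end Transitive

section Cyclic

/-- The `R`-module `N` is generated by `w`, whose annihilator is the principal ideal `(s)`; in other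
words, `r ↦ r • w` identifies `R ⧸ (s)` with `N`. -/
structure IsCyclicVector {R N : Type*} [CommRing R] [AddCommGroup N] [Module R N] (s : R)
    (w : N) : Prop where
  exists_smul_eq : ∀ y : N, ∃ r : R, r • w = y
  smul_eq_zero_iff : ∀ r : R, r • w = 0 ↔ s ∣ r

lemma IsCyclicVector.smul_eq_zero_of_dvd {R N : Type*} [CommRing R] [AddCommGroup N] [Module R N]
    {s r : R} {w : N} (hw : IsCyclicVector s w) (hr : s ∣ r) (y : N) : r • y = 0 := by
  obtain ⟨f, rfl⟩ := hw.exists_smul_eq y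
  rw [smul_comm, (hw.smul_eq_zero_iff r).2 hr, smul_zero]

lemma IsCyclicVector.smul_ne_zero {F N : Type*} [Field F] [AddCommGroup N]
    [Module F[X] N] {w : N} {lam : F} {r : F[X]}
    (hw : IsCyclicVector ((X - C lam) * r) w) (hr : r ≠ 0) : r • w ≠ 0 := by
  rw [Ne, hw.smul_eq_zero_iff]
  intro hdvd
  refine not_isUnit_X_sub_C lam (isUnit_of_dvd_one ((mul_dvd_mul_iff_right hr).1 ?_))
  rwa [one_mul]

variable {F N : Type*} [Field F] [AddCommGroup N] [Module F N] [Module F[X] N]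
  [IsScalarTower F F[X] N] {s : F[X]} {w : N}

lemma IsCyclicVector.finrank_eq (hw : IsCyclicVector s w) :
    finrank F N = s.natDegree := by
  have hspan : F[X] ∙ w = ⊤ := eq_top_iff.2 fun y _ ↦
    Submodule.mem_span_singleton.2 (hw.exists_smul_eq y)
  have htorsion : Ideal.torsionOf F[X] N w = Ideal.span {s} := by
    ext f
    rw [Ideal.mem_torsionOf_iff, Ideal.mem_span_singleton, hw.smul_eq_zero_iff]
  have e := Ideal.quotTorsionOfEquivSpanSingleton F[X] N w
  rw [← finrank_quotient_span_eq_natDegree, ← htorsion, (e.restrictScalars F).finrank_eq, hspan]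
  exact (Submodule.topEquiv.restrictScalars F).finrank_eq.symm

lemma IsCyclicVector.mem_span_of_X_sub_C_smul_eq_zero {lam : F} {r : F[X]}
    (hw : IsCyclicVector ((X - C lam) * r) w) {y : N} (hy : (X - C lam) • y = 0) :
    y ∈ F ∙ (r • w) := by
  obtain ⟨f, rfl⟩ := hw.exists_smul_eq y
  rw [smul_smul, hw.smul_eq_zero_iff, mul_dvd_mul_iff_left (X_sub_C_ne_zero lam)] at hy
  obtain ⟨t, rfl⟩ := hy
  have hzero : (r * (t - C (t.eval lam))) • w = 0 := by
    rw [hw.smul_eq_zero_iff, mul_comm r]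
    exact mul_dvd_mul_right X_sub_C_dvd_sub_C_eval r
  rw [mul_sub, sub_smul, sub_eq_zero] at hzero
  refine Submodule.mem_span_singleton.2 ⟨t.eval lam, ?_⟩
  rw [hzero, mul_comm, ← smul_eq_C_mul, smul_assoc]

variable {V V' : Type*} [AddCommGroup V] [Module F V] [AddCommGroup V'] [Module F V']
  {L : Submodule F (V →ₗ[F] V')} {T : V' →ₗ[F] N}

lemma IsCyclicVector.exists_smul_comp_eq [FiniteDimensional F V] {lam : F} {r : F[X]}
    (hw : IsCyclicVector ((X - C lam) * r) w) (hr : r ≠ 0) (hL : IsTransitive L)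
    (hT : Function.Surjective T) {M : V →ₗ[F] N} (hM : (X - C lam) • M = 0) :
    ∃ R ∈ L, r • (T ∘ₗ R) = M := by
  -- Both `M` and `r • T` take values in the line `F ∙ (r • w)`, so they are given by functionals.
  have hu : r • w ≠ 0 := hw.smul_ne_zero hr
  obtain ⟨ψ, rfl⟩ : ∃ ψ : Dual F V, M = ψ.smulRight (r • w) :=
    exists_eq_smulRight hu fun x ↦
      hw.mem_span_of_X_sub_C_smul_eq_zero (LinearMap.congr_fun hM x)
  obtain ⟨φ, hφ⟩ : ∃ φ : Dual F V', r • T = φ.smulRight (r • w) :=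
    exists_eq_smulRight hu fun x ↦ hw.mem_span_of_X_sub_C_smul_eq_zero <| by
      rw [LinearMap.smul_apply, smul_smul, hw.smul_eq_zero_of_dvd dvd_rfl]
  have hφ0 : φ ≠ 0 := by
    rintro rfl
    obtain ⟨y, hy⟩ := hT w
    exact hu (by simpa [hy] using LinearMap.congr_fun hφ y)
  obtain ⟨R, hR, rfl⟩ := hL.exists_comp_eq hφ0 ψ
  exact ⟨R, hR, by rw [← LinearMap.smul_comp, hφ]; rfl⟩

lemma IsCyclicVector.mem_of_prod_X_sub_C_smul_eq_zero [FiniteDimensional F V] (hL : IsTransitive L)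
    (hT : Function.Surjective T) {Y : Submodule F (V →ₗ[F] N)}
    (hY : ∀ f : F[X], ∀ R ∈ L, f • (T ∘ₗ R) ∈ Y) {m : Multiset F} {t : F[X]}
    (hw : IsCyclicVector ((m.map (X - C ·)).prod * t) w) (ht : t ≠ 0) {M : V →ₗ[F] N}
    (hM : (m.map (X - C ·)).prod • M = 0) : M ∈ Y := by
  induction m using Multiset.induction_on generalizing t M with
  | empty =>
    obtain rfl : M = 0 := by simpa using hM
    exact Y.zero_mem
  | cons lam m ih =>
    set h := (m.map (X - C ·)).prod with hh
    rw [Multiset.map_cons, Multiset.prod_cons, ← hh] at hw hM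
    have hr : h * t ≠ 0 := mul_ne_zero (monic_multisetProd_X_sub_C m).ne_zero ht
    obtain ⟨R, hR, hRM⟩ : ∃ R ∈ L, (h * t) • (T ∘ₗ R) = h • M :=
      (mul_assoc _ h t ▸ hw).exists_smul_comp_eq hr hL hT (by rwa [smul_smul])
    have hsub : M - t • (T ∘ₗ R) ∈ Y := by
      refine ih (t := (X - C lam) * t) ?_ (mul_ne_zero (X_sub_C_ne_zero lam) ht) ?_
      · rwa [mul_left_comm, ← mul_assoc]
      · rw [smul_sub, smul_smul, hRM, sub_self]
    simpa using Y.add_mem hsub (hY t R hR)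

theorem IsCyclicVector.eq_top_of_smul_comp_mem [FiniteDimensional F V] (hw : IsCyclicVector s w)
    (hs : s ≠ 0) (hsplit : s.Splits) (hL : IsTransitive L) (hT : Function.Surjective T)
    {Y : Submodule F (V →ₗ[F] N)} (hY : ∀ f : F[X], ∀ R ∈ L, f • (T ∘ₗ R) ∈ Y) : Y = ⊤ := by
  have hprod : (s.roots.map (X - C ·)).prod * C s.leadingCoeff = s := by
    rw [mul_comm, ← hsplit.eq_prod_roots]
  have hlead : C s.leadingCoeff ≠ 0 := by simpa
  have hdvd : s ∣ (s.roots.map (X - C ·)).prod := by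
    conv_lhs => rw [← hprod]
    exact (isUnit_C.2 (leadingCoeff_ne_zero.2 hs).isUnit).mul_right_dvd.2 dvd_rfl
  exact eq_top_iff.2 fun M _ ↦ IsCyclicVector.mem_of_prod_X_sub_C_smul_eq_zero hL hT hY
    (hprod.symm ▸ hw) hlead (LinearMap.ext fun x ↦ hw.smul_eq_zero_of_dvd hdvd (M x))

end Cyclic

section Invariants

lemma natDegree_minpoly_le_finrank {F V : Type*} [Field F] [AddCommGroup V] [Module F V]
    [FiniteDimensional F V] (a : End F V) : (minpoly F a).natDegree ≤ finrank F V := by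
  rw [← LinearMap.charpoly_natDegree a]
  exact natDegree_le_of_dvd (LinearMap.minpoly_dvd_charpoly a) a.charpoly_monic.ne_zero

variable {F M : Type*} [Field F] [AddCommGroup M] [Module F M] [Module F[X] M]
  [IsScalarTower F F[X] M]

lemma aeval_lsmul_X_apply (f : F[X]) (y : M) :
    aeval (Algebra.lsmul F F M (X : F[X])) f y = f • y := by
  rw [aeval_algHom_apply, aeval_X_left_apply, Algebra.lsmul_coe]

lemma minpoly_lsmul_X_dvd_iff {f : F[X]} :
    minpoly F (Algebra.lsmul F F M (X : F[X])) ∣ f ↔ ∀ y : M, f • y = 0 := by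
  simp_rw [minpoly.dvd_iff, LinearMap.ext_iff, aeval_lsmul_X_apply, LinearMap.zero_apply]

variable (M) in
lemma exists_smul_eq_zero_iff_minpoly_dvd [FiniteDimensional F M] :
    ∃ c : M, ∀ f : F[X], f • c = 0 ↔ minpoly F (Algebra.lsmul F F M (X : F[X])) ∣ f := by
  have : Module.Finite F[X] M := .of_restrictScalars_finite F F[X] M
  obtain ⟨c, hc⟩ := exists_ker_toSpanSingleton_eq_annihilator F[X] M
  refine ⟨c, fun f ↦ ?_⟩
  rw [minpoly_lsmul_X_dvd_iff, ← Module.mem_annihilator, ← hc, LinearMap.mem_ker,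
    LinearMap.toSpanSingleton_apply]

end Invariants

section Structure

variable {F M : Type*} [Field F] [AddCommGroup M] [Module F M] [Module F[X] M]
  [IsScalarTower F F[X] M]

lemma isCyclicVector_span_singleton {R N : Type*} [CommRing R] [AddCommGroup N] [Module R N] {s : R}
    {w : N} (hw : ∀ r : R, r • w = 0 ↔ s ∣ r) :
    IsCyclicVector s (⟨w, Submodule.mem_span_singleton_self w⟩ : R ∙ w) where
  exists_smul_eq := fun ⟨y, hy⟩ ↦ by
    obtain ⟨r, rfl⟩ := Submodule.mem_span_singleton.1 hy
    exact ⟨r, rfl⟩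
  smul_eq_zero_iff r := Subtype.ext_iff.trans (hw r)

lemma smul_mem_span_singleton_smul {R N : Type*} [CommRing R] [IsDomain R] [AddCommGroup N]
    [Module R N] {g s : R} {c y : N} (hs : s ≠ 0) (hc : ∀ r : R, r • c = 0 ↔ g * s ∣ r)
    (hy : (g * s) • y = 0) (hgy : g • y ∈ R ∙ c) : g • y ∈ R ∙ (g • c) := by
  obtain ⟨r, hr⟩ := Submodule.mem_span_singleton.1 hgy
  have hdvd : g * s ∣ r * s := by rw [← hc, mul_comm, mul_smul, hr, smul_smul, mul_comm, hy]
  obtain ⟨t, rfl⟩ := (mul_dvd_mul_iff_right hs).1 hdvd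
  exact Submodule.mem_span_singleton.2 ⟨t, by rw [smul_smul, mul_comm, hr]⟩

variable (F M) in
theorem exists_minpoly_eq_mul_smul_mem_span_singleton [FiniteDimensional F M] :
    ∃ (g s : F[X]) (c : M), minpoly F (Algebra.lsmul F F M (X : F[X])) = g * s ∧
      (∀ y : M, g • y ∈ F[X] ∙ (g • c)) ∧ (∀ f : F[X], f • g • c = 0 ↔ s ∣ f) ∧
      g.natDegree + (g * s).natDegree ≤ finrank F M := by
  obtain ⟨c, hc⟩ := exists_smul_eq_zero_iff_minpoly_dvd (F := F) M
  set p := minpoly F (Algebra.lsmul F F M (X : F[X]))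
  let Q := M ⧸ (F[X] ∙ c)
  let g := minpoly F (Algebra.lsmul F F Q (X : F[X]))
  have hg (f : F[X]) : g ∣ f ↔ ∀ y : M, f • y ∈ F[X] ∙ c := by
    rw [minpoly_lsmul_X_dvd_iff, (Submodule.mkQ_surjective _).forall]
    exact forall_congr' fun y ↦ Submodule.Quotient.mk_eq_zero _ (x := f • y)
  have hp_smul (y : M) : p • y = 0 := minpoly_lsmul_X_dvd_iff.1 dvd_rfl y
  obtain ⟨s, hs⟩ : g ∣ p := (hg p).2 fun y ↦ by simp [hp_smul]
  have hp0 : p ≠ 0 := minpoly.ne_zero (Algebra.IsIntegral.isIntegral _)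
  have hs0 : s ≠ 0 := right_ne_zero_of_mul (hs ▸ hp0)
  have hg0 : g ≠ 0 := left_ne_zero_of_mul (hs ▸ hp0)
  refine ⟨g, s, c, hs, fun y ↦ ?_, fun f ↦ ?_, ?_⟩
  · exact smul_mem_span_singleton_smul hs0 (hs ▸ hc) (hs ▸ hp_smul y) ((hg g).1 dvd_rfl y)
  · rw [smul_smul, hc, hs, mul_comm f, mul_dvd_mul_iff_left hg0]
  · have hK : finrank F (F[X] ∙ c) = p.natDegree := (isCyclicVector_span_singleton hc).finrank_eq
    have hQ : g.natDegree ≤ finrank F Q := natDegree_minpoly_le_finrank _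
    have hsum : finrank F Q + finrank F (F[X] ∙ c) = finrank F M := by
      rw [← (Submodule.Quotient.restrictScalarsEquiv F (F[X] ∙ c)).finrank_eq]
      exact Submodule.finrank_quotient_add_finrank ((F[X] ∙ c).restrictScalars F)
    rw [← hs]
    lia

end Structure

section Length

lemma mul_eq_top_of_smul_eq_top {F V : Type*} [Field F] [AddCommGroup V] [Module F V]
    [FiniteDimensional F V] {B C : Submodule F (End F V)} {U : Submodule F V} (hB : B • U = ⊤)
    (hC : ∀ R : End F V, (∀ x, R x ∈ U) → R ∈ C) : B * C = ⊤ := by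
  have hrank_one (φ : Dual F V) (y : V) : φ.smulRight y ∈ B * C := by
    refine Submodule.smul_induction_on (p := fun y ↦ φ.smulRight y ∈ B * C)
      (hB ▸ Submodule.mem_top : y ∈ B • U) (fun b hb u hu ↦ ?_) fun y z hy hz ↦ ?_
    · have hmul : φ.smulRight (b • u) = b * φ.smulRight u := by ext; simp
      rw [hmul]
      exact Submodule.mul_mem_mul hb (hC _ fun x ↦ U.smul_mem (φ x) hu)
    · have hadd : φ.smulRight (y + z) = φ.smulRight y + φ.smulRight z := by ext; simp
      exact hadd ▸ add_mem hy hz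
  let b := finBasis F V
  refine eq_top_iff.2 fun R _ ↦ ?_
  have hsum : R = ∑ i, (b.coord i).smulRight (R (b i)) := by
    refine b.ext fun j ↦ ?_
    simp [Finsupp.single_apply]
  rw [hsum]
  exact Submodule.sum_mem _ fun i _ ↦ hrank_one _ _

variable {F M : Type*} [Field F] [AddCommGroup M] [Module F M] [Module F[X] M]
  [IsScalarTower F F[X] M] [FiniteDimensional F M] {S : Set (End F M)}

lemma IsGeneratingSystem.mem_wordSpan_of_apply_mem_span (hS : IsGeneratingSystem F S)
    (hX : Algebra.lsmul F F M (X : F[X]) ∈ S) {g s : F[X]} {c : M}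
    (hg : ∀ y : M, g • y ∈ F[X] ∙ (g • c)) (hann : ∀ f : F[X], f • g • c = 0 ↔ s ∣ f)
    (hs : s ≠ 0) (hsplit : s.Splits) {R : End F M} (hR : ∀ x, R x ∈ F[X] ∙ (g • c)) :
    R ∈ wordSpan F S ((minpoly F (Algebra.lsmul F F M (X : F[X]))).natDegree - 1 +
      (finrank F M - 1)) := by
  set d := (minpoly F (Algebra.lsmul F F M (X : F[X]))).natDegree
  let U := F[X] ∙ (g • c)
  let T : M →ₗ[F] U := (Algebra.lsmul F F M g).codRestrict (U.restrictScalars F) hg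
  have hT : Function.Surjective T := by
    rintro ⟨y, hy⟩
    obtain ⟨f, rfl⟩ := Submodule.mem_span_singleton.1 hy
    exact ⟨f • c, Subtype.ext (smul_comm g f c)⟩
  let Y := (wordSpan F S (d - 1 + (finrank F M - 1))).comap
    (LinearMap.compRight F (M := M) (U.subtype.restrictScalars F))
  have hY (f : F[X]) (W : End F M) (hW : W ∈ wordSpan F S (finrank F M - 1)) :
      f • (T ∘ₗ W) ∈ Y := by
    have hmul : aeval (Algebra.lsmul F F M (X : F[X])) (f * g) * W ∈
        wordSpan F S (d - 1 + (finrank F M - 1)) :=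
      mul_mem_wordSpan_add
        (aeval_mem_wordSpan_natDegree_minpoly hX (Algebra.IsIntegral.isIntegral _) _) hW
    have hcomp : U.subtype.restrictScalars F ∘ₗ (f • (T ∘ₗ W)) =
        aeval (Algebra.lsmul F F M (X : F[X])) (f * g) * W := by
      ext x
      rw [Module.End.mul_apply, aeval_lsmul_X_apply, mul_smul]
      rfl
    change U.subtype.restrictScalars F ∘ₗ (f • (T ∘ₗ W)) ∈ wordSpan F S _
    exact hcomp ▸ hmul
  have htop : Y = ⊤ := (isCyclicVector_span_singleton hann).eq_top_of_smul_comp_mem hs hsplit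
    hS.isTransitive_wordSpan hT hY
  let R' : M →ₗ[F] U := R.codRestrict (U.restrictScalars F) hR
  have hR' : R' ∈ Y := htop ▸ Submodule.mem_top
  exact hR'

theorem IsGeneratingSystem.genLength_le_of_lsmul_X_mem (hS : IsGeneratingSystem F S)
    (hX : Algebra.lsmul F F M (X : F[X]) ∈ S) {k : ℕ} (hk : 2 * k < finrank F M)
    (hsplit : (minpoly F (Algebra.lsmul F F M (X : F[X]))).Splits)
    (hdeg : (minpoly F (Algebra.lsmul F F M (X : F[X]))).natDegree = finrank F M - k) :
    genLength F S ≤ 2 * finrank F M - 2 + k := by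
  have : Nontrivial M := nontrivial_of_finrank_pos (R := F) (by lia)
  obtain ⟨g, s, c, hp, hg, hann, hle⟩ := exists_minpoly_eq_mul_smul_mem_span_singleton F M
  have hp0 : g * s ≠ 0 := hp ▸ minpoly.ne_zero (Algebra.IsIntegral.isIntegral _)
  have hs0 : s ≠ 0 := right_ne_zero_of_mul hp0
  have hs_split : s.Splits := (hp ▸ hsplit).of_dvd hp0 (dvd_mul_left s g)
  let U := (F[X] ∙ (g • c)).restrictScalars F
  have hU : finrank F M ≤ finrank F U + 2 * k := by
    have hUs : finrank F U = s.natDegree := (isCyclicVector_span_singleton hann).finrank_eq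
    have hmul := natDegree_mul (left_ne_zero_of_mul hp0) hs0
    rw [hp] at hdeg
    lia
  have hspread : wordSpan F S (2 * k) • U = ⊤ :=
    hS.wordSpan_smul_eq_top (Submodule.one_le_finrank_iff.1 (by lia)) hU
  have hmul := mul_eq_top_of_smul_eq_top hspread fun R hR ↦
    hS.mem_wordSpan_of_apply_mem_span hX hg hann hs0 hs_split hR
  refine Nat.sInf_le (eq_top_mono ((wordSpan_mul_wordSpan_le _ _).trans (wordSpan_mono_s18 ?_)) hmul)
  lia

end Length

theorem length_le_of_minpoly_deg_sub_k_jordan_condition_general {F V : Type*} [Field F]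
    [AddCommGroup V] [Module F V] [FiniteDimensional F V] {S : Set (End F V)}
    (hS : IsGeneratingSystem F S) {a : End F V} (ha : a ∈ S) (hsplit : (minpoly F a).Splits) {k : ℕ}
    (hk : 2 * k < finrank F V) (hdeg : (minpoly F a).natDegree = finrank F V - k) :
    genLength F S ≤ 2 * finrank F V - 2 + k := by
  let e : End F V ≃ₐ[F] End F (AEval' a) := (AEval'.of a).conjAlgEquiv F
  have he : e a = Algebra.lsmul F F (AEval' a) (X : F[X]) := by
    ext x
    obtain ⟨x, rfl⟩ := (AEval'.of a).surjective x
    simp [e, AEval'.X_smul_of]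
  have : FiniteDimensional F (AEval' a) := (AEval'.of a).finiteDimensional
  rw [← minpoly.algEquiv_eq e, he] at hsplit hdeg
  rw [(AEval'.of a).finrank_eq] at hk hdeg ⊢
  rw [← genLength_image e]
  exact (hS.image e).genLength_le_of_lsmul_X_mem (he ▸ Set.mem_image_of_mem e ha) hk hsplit hdeg

theorem length_le_of_minpoly_deg_sub_k_jordan_condition
    (F : Type*) [Field F] [IsAlgClosed F] (n k : ℕ)
    (hn : 0 < n) (hk : 0 < k) (hkn : 2 * k < n)
    (S : Finset (Matrix (Fin n) (Fin n) F))
    (hgen : IsGeneratingSystem F (S : Set (Matrix (Fin n) (Fin n) F)))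
    (A : Matrix (Fin n) (Fin n) F) (hAS : A ∈ S)
    (hdeg : (minpoly F A).natDegree = n - k)
    (hjordan : ∀ lam ∈ spectrum F A,
      2 * (A.charpoly.rootMultiplicity lam - (minpoly F A).rootMultiplicity lam) <
        A.charpoly.rootMultiplicity lam) :
    genLength F (S : Set (Matrix (Fin n) (Fin n) F)) ≤ 2 * n - 2 + k := by
  let e : Matrix (Fin n) (Fin n) F ≃ₐ[F] End F (Fin n → F) := Matrix.toLinAlgEquiv'
  simpa [genLength_image] using length_le_of_minpoly_deg_sub_k_jordan_condition_general
    (hgen.image e) (Set.mem_image_of_mem e hAS) (IsAlgClosed.splits _) (k := k) (by simpa)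
    (by rw [minpoly.algEquiv_eq, hdeg, finrank_fin_fun])
end
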